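/- arXiv:2010.14853 — 2 statements merged into one kernel-verified Lean document; each statement's English description precedes it below -/
import Mathlib

section
/- Let d ≥ 1 be an integer, m ∈ ℝ, and k ∈ ℕ. Suppose α ∈ ℝ^d satisfies 0 ≤ α₁ ≤ α₂ ≤ … ≤ α_d ≤ 1/4 and the exact modulation-index constraint (4/π)·Σ_{i=1}^{d} (−1)^{i+1}·cos(2πα_i) = m. Then the Taylor-approximated constraint value satisfies m − Δm_k ≤ (4/π)·Σ_{i=1}^{d} (−1)^{i+1}·Γ_k(α_i) ≤ m + Δm_k, where Γ_k is the degree-k Taylor polynomial of cos(2π·) about α₀ = 1/8 and Δm_k = (4d/π)·(2π)^{k+1}·(1/8)^{k+1}/(k+1)!. In other words, every feasible point of the exact OPP problem is feasible for its level-k Taylor relaxation. -/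
open Real

/-- The degree-`k` Taylor polynomial of `f(α) = cos(2πα)` about the expansion point `α₀`,
`Γ_k(α) = Σ_{n=0}^{k} f⁽ⁿ⁾(α₀)·(α − α₀)^n/n!`, evaluated at `α`. -/
noncomputable def taylorCos (k : ℕ) (α₀ α : ℝ) : ℝ :=
  ∑ n ∈ Finset.range (k + 1),
    iteratedDeriv n (fun t : ℝ => Real.cos (2 * π * t)) α₀ / n.factorial * (α - α₀) ^ n

/-- The iterated derivatives of `t ↦ cos (2πt)` are bounded by `(2π) ^ n`. -/
theorem abs_iteratedDeriv_cos_two_pi_mul_le (n : ℕ) (x : ℝ) :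
    |iteratedDeriv n (fun t : ℝ => Real.cos (2 * π * t)) x| ≤ (2 * π) ^ n := by
  rw [iteratedDeriv_comp_const_mul Real.contDiff_cos]
  simp only [abs_mul, abs_pow, abs_of_pos Real.two_pi_pos]
  exact mul_le_of_le_one_right (by positivity) (Real.abs_iteratedDeriv_cos_le_one n _)

/-- Lagrange bound on the error of the Taylor polynomial of `t ↦ cos (2πt)`. -/
theorem abs_cos_two_pi_mul_sub_taylorCos_le (k : ℕ) (x₀ x : ℝ) :
    |Real.cos (2 * π * x) - taylorCos k x₀ x|
      ≤ (2 * π) ^ (k + 1) * |x - x₀| ^ (k + 1) / (k + 1).factorial := by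
  have hf (n : ℕ) : ContDiff ℝ n (fun t : ℝ => Real.cos (2 * π * t)) := by fun_prop
  rcases eq_or_ne x₀ x with rfl | hx
  · simp [taylorCos, Finset.sum_range_succ']
  · obtain ⟨y, -, hy⟩ := taylor_mean_remainder_lagrange_iteratedDeriv (n := k) hx
      (hf (k + 1)).contDiffOn
    have htaylor : taylorWithinEval (fun t : ℝ => Real.cos (2 * π * t)) k (Set.uIcc x₀ x) x₀ x
        = taylorCos k x₀ x := by
      rw [taylor_within_apply, taylorCos]
      refine Finset.sum_congr rfl fun n _ => ?_
      rw [iteratedDerivWithin_eq_iteratedDeriv (uniqueDiffOn_uIcc hx) (hf n).contDiffAt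
        Set.left_mem_uIcc, smul_eq_mul]
      ring
    rw [← htaylor, hy, abs_div, abs_mul, abs_pow, Nat.abs_cast]
    gcongr
    exact abs_iteratedDeriv_cos_two_pi_mul_le _ _

/-- Let d ≥ 1, m ∈ ℝ, k ∈ ℕ. Suppose α ∈ ℝ^d satisfies
0 ≤ α₁ ≤ … ≤ α_d ≤ 1/4 and (4/π)·Σ_{i=1}^d (−1)^{i+1}·cos(2πα_i) = m.  Then
m − Δm_k ≤ (4/π)·Σ_{i=1}^d (−1)^{i+1}·Γ_k(α_i) ≤ m + Δm_k, with Γ_k the degree-k Taylor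
polynomial of cos(2π·) about α₀ = 1/8 and Δm_k = (4d/π)·(2π)^{k+1}·(1/8)^{k+1}/(k+1)!.
(Indexing by `i : Fin d`, the transition `(−1)^{i+1}` of the 1-based index `i+1`
becomes `(−1)^{i}` for the 0-based index.) -/
theorem exact_feasible_implies_relaxed_feasible (d : ℕ) (hd : 1 ≤ d) (m : ℝ) (k : ℕ)
    (α : Fin d → ℝ) (hmono : Monotone α) (h0 : ∀ i, 0 ≤ α i) (h1 : ∀ i, α i ≤ 1 / 4)
    (heq : (4 / π) * ∑ i : Fin d, (-1 : ℝ) ^ (i : ℕ) * Real.cos (2 * π * α i) = m) :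
    m - (4 * (d : ℝ) / π) * (2 * π) ^ (k + 1) * (1 / 8 : ℝ) ^ (k + 1) / (k + 1).factorial
        ≤ (4 / π) * ∑ i : Fin d, (-1 : ℝ) ^ (i : ℕ) * taylorCos k (1 / 8) (α i)
    ∧ (4 / π) * ∑ i : Fin d, (-1 : ℝ) ^ (i : ℕ) * taylorCos k (1 / 8) (α i)
        ≤ m + (4 * (d : ℝ) / π) * (2 * π) ^ (k + 1) * (1 / 8 : ℝ) ^ (k + 1)
            / (k + 1).factorial := by
  have hsum : |∑ i : Fin d, (-1 : ℝ) ^ (i : ℕ) * Real.cos (2 * π * α i)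
      - ∑ i : Fin d, (-1 : ℝ) ^ (i : ℕ) * taylorCos k (1 / 8) (α i)|
      ≤ d * ((2 * π) ^ (k + 1) * (1 / 8 : ℝ) ^ (k + 1) / (k + 1).factorial) := by
    rw [← Finset.sum_sub_distrib]
    refine (Finset.abs_sum_le_sum_abs _ _).trans ?_
    refine (Finset.sum_le_card_nsmul _ _
      ((2 * π) ^ (k + 1) * (1 / 8 : ℝ) ^ (k + 1) / (k + 1).factorial) fun i _ => ?_).trans_eq
        (by simp)
    rw [← mul_sub, abs_mul, abs_pow, abs_neg, abs_one, one_pow, one_mul]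
    refine (abs_cos_two_pi_mul_sub_taylorCos_le k (1 / 8) (α i)).trans ?_
    have hdist : |α i - 1 / 8| ≤ 1 / 8 :=
      abs_le.2 ⟨by linarith [h0 i], by linarith [h1 i]⟩
    gcongr
  have hscaled := mul_le_mul_of_nonneg_left hsum (by positivity : 0 ≤ 4 / π)
  rw [← abs_of_nonneg (by positivity : 0 ≤ 4 / π), ← abs_mul,
    abs_of_nonneg (by positivity : 0 ≤ 4 / π), mul_sub, heq] at hscaled
  have hbound : 4 / π * (d * ((2 * π) ^ (k + 1) * (1 / 8 : ℝ) ^ (k + 1) / (k + 1).factorial))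
      = (4 * (d : ℝ) / π) * (2 * π) ^ (k + 1) * (1 / 8 : ℝ) ^ (k + 1) / (k + 1).factorial := by
    ring
  rw [hbound, abs_le] at hscaled
  constructor <;> linarith [hscaled.1, hscaled.2]
end

section
/- Let d ≥ 1 be an integer, m ∈ ℝ, k ∈ ℕ, and let J : ℝ^d → ℝ be any function. Let S = {α ∈ ℝ^d : 0 ≤ α₁ ≤ … ≤ α_d ≤ 1/4 and (4/π)·Σ_{i=1}^{d}(−1)^{i+1}·cos(2πα_i) = m} and S_k = {α ∈ ℝ^d : 0 ≤ α₁ ≤ … ≤ α_d ≤ 1/4 and m − Δm_k ≤ (4/π)·Σ_{i=1}^{d}(−1)^{i+1}·Γ_k(α_i) ≤ m + Δm_k}. If S is nonempty and J is bounded below on S_k, then the infimum of J over S_k is at most the infimum of J over S; that is, J_k* ≤ J*. -/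
open Real

/-- The modulation-index error bound Δm_k = (4d/π)·(2π)^{k+1}·(1/8)^{k+1}/(k+1)!. -/
noncomputable def deltaM (d k : ℕ) : ℝ :=
  (4 * (d : ℝ) / π) * (2 * π) ^ (k + 1) * (1 / 8 : ℝ) ^ (k + 1) / (k + 1).factorial

/-- The exact OPP feasible set S: vectors α ∈ ℝ^d with 0 ≤ α₁ ≤ … ≤ α_d ≤ 1/4 satisfying
(4/π)·Σ_{i=1}^d (−1)^{i+1}·cos(2πα_i) = m (0-based indexing turns (−1)^{i+1} into (−1)^i). -/
def exactSet (d : ℕ) (m : ℝ) : Set (Fin d → ℝ) :=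
  {α | Monotone α ∧ (∀ i, 0 ≤ α i) ∧ (∀ i, α i ≤ 1 / 4) ∧
    (4 / π) * ∑ i : Fin d, (-1 : ℝ) ^ (i : ℕ) * Real.cos (2 * π * α i) = m}

/-- The level-k Taylor relaxed feasible set S_k: the equality constraint is replaced by
m − Δm_k ≤ (4/π)·Σ_{i=1}^d (−1)^{i+1}·Γ_k(α_i) ≤ m + Δm_k. -/
noncomputable def relaxedSet (d : ℕ) (m : ℝ) (k : ℕ) : Set (Fin d → ℝ) :=
  {α | Monotone α ∧ (∀ i, 0 ≤ α i) ∧ (∀ i, α i ≤ 1 / 4) ∧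
    m - deltaM d k ≤ (4 / π) * ∑ i : Fin d, (-1 : ℝ) ^ (i : ℕ) * taylorCos k (1 / 8) (α i) ∧
    (4 / π) * ∑ i : Fin d, (-1 : ℝ) ^ (i : ℕ) * taylorCos k (1 / 8) (α i) ≤ m + deltaM d k}

theorem taylorCos_eq_taylorWithinEval (k : ℕ) {α₀ α : ℝ} (h : α₀ ≠ α) :
    taylorCos k α₀ α =
      taylorWithinEval (fun t : ℝ => Real.cos (2 * π * t)) k (Set.uIcc α₀ α) α₀ α := by
  rw [taylor_within_apply, taylorCos]
  refine Finset.sum_congr rfl fun n _ => ?_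
  rw [iteratedDerivWithin_eq_iteratedDeriv (uniqueDiffOn_uIcc h)
    (by fun_prop) Set.left_mem_uIcc, smul_eq_mul]
  ring

/-- The Lagrange bound for the Taylor remainder of `cos (2πα)`. -/
theorem abs_cos_sub_taylorCos_le (k : ℕ) (α₀ α : ℝ) :
    |Real.cos (2 * π * α) - taylorCos k α₀ α| ≤
      (2 * π) ^ (k + 1) * |α - α₀| ^ (k + 1) / (k + 1).factorial := by
  rcases eq_or_ne α₀ α with rfl | h
  · simp [taylorCos, Finset.sum_range_succ']
  · obtain ⟨x, -, hx⟩ := taylor_mean_remainder_lagrange_iteratedDeriv (n := k) h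
      (f := fun t : ℝ => Real.cos (2 * π * t)) (by fun_prop)
    rw [taylorCos_eq_taylorWithinEval k h, hx, abs_div, abs_mul, abs_pow, Nat.abs_cast]
    gcongr
    exact abs_iteratedDeriv_cos_two_pi_mul_le _ _

theorem abs_modulation_sub_le_deltaM {d : ℕ} (k : ℕ) {α : Fin d → ℝ}
    (h0 : ∀ i, 0 ≤ α i) (h1 : ∀ i, α i ≤ 1 / 4) :
    |(4 / π) * ∑ i : Fin d, (-1 : ℝ) ^ (i : ℕ) * Real.cos (2 * π * α i) -
      (4 / π) * ∑ i : Fin d, (-1 : ℝ) ^ (i : ℕ) * taylorCos k (1 / 8) (α i)| ≤ deltaM d k := by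
  have hterm : ∀ i ∈ (Finset.univ : Finset (Fin d)), |(-1 : ℝ) ^ (i : ℕ) * Real.cos (2 * π * α i) -
      (-1 : ℝ) ^ (i : ℕ) * taylorCos k (1 / 8) (α i)| ≤
      (2 * π) ^ (k + 1) * (1 / 8 : ℝ) ^ (k + 1) / (k + 1).factorial := by
    intro i _
    rw [← mul_sub, abs_mul, abs_neg_one_pow, one_mul]
    refine (abs_cos_sub_taylorCos_le k _ _).trans ?_
    have : |α i - 1 / 8| ≤ 1 / 8 := abs_le.2 ⟨by linarith [h0 i], by linarith [h1 i]⟩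
    gcongr
  rw [← mul_sub, ← Finset.sum_sub_distrib, abs_mul, abs_of_pos (by positivity : 0 < 4 / π)]
  calc _ ≤ 4 / π * (d * ((2 * π) ^ (k + 1) * (1 / 8 : ℝ) ^ (k + 1) / (k + 1).factorial)) := by
        gcongr
        refine (Finset.abs_sum_le_sum_abs _ _).trans
          ((Finset.sum_le_card_nsmul _ _ _ hterm).trans ?_)
        simp
    _ = deltaM d k := by rw [deltaM]; ring

theorem exactSet_subset_relaxedSet (d : ℕ) (m : ℝ) (k : ℕ) :
    exactSet d m ⊆ relaxedSet d m k := by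
  rintro α ⟨hmono, h0, h1, rfl⟩
  have h := abs_le.1 (abs_modulation_sub_le_deltaM k h0 h1)
  exact ⟨hmono, h0, h1, by linarith [h.2], by linarith [h.1]⟩

/-- If S is nonempty and J is bounded below on S_k, then the infimum of J over
the level-k relaxed feasible set S_k is at most the infimum of J over the exact feasible
set S; that is, J_k* ≤ J*. -/
theorem relaxed_inf_le_exact_inf (d : ℕ) (hd : 1 ≤ d) (m : ℝ) (k : ℕ)
    (J : (Fin d → ℝ) → ℝ) (hne : (exactSet d m).Nonempty)
    (hbdd : BddBelow (J '' relaxedSet d m k)) :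
    sInf (J '' relaxedSet d m k) ≤ sInf (J '' exactSet d m) := by
  exact csInf_le_csInf hbdd (hne.image J)
    (Set.image_mono (exactSet_subset_relaxedSet d m k))
end
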